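/- Let s ≥ 2, let h₁ and h₂ be units of 𝓚, and let a, t₁, t₂ be integers with 2^{s-1} ≤ a ≤ 2^{s-1} + t₁, 0 ≤ t₁ < 2^{s-1}, 0 ≤ t₂ and 2t₁ ≥ a + t₂, such that h₁(x) ≡ x^{a−t₁} h₁(x^{-1}) (mod (x+1)^{2^{s-1}−t₁}) in 𝓚. Let C = ⟨(x+1)^a + u(x+1)^{t₁} h₁(x) + u²(x+1)^{t₂} h₂(x), u(x+1)^{2^{s-1}} + u²(x+1)^{2^{s-1}+t₁−a} x^{a−t₁} h₁(x^{-1}), u²(x+1)^{2^s−a}⟩, and assume Tor_0(C) = ⟨(x+1)^a⟩, Tor_1(C) = ⟨(x+1)^{2^{s-1}}⟩, Tor_2(C) = ⟨(x+1)^{2^s−a}⟩. Then 𝒜(C) = ⟨(x+1)^a + u(x+1)^{t₁} h₁(x) + u²(x+1)^{t₂} F(x), u(x+1)^{2^{s-1}} + u²(x+1)^{2^{s-1}+t₁−a} h₁(x), u²(x+1)^{2^s−a}⟩, where F(x) = h₂(x) + (x+1)^{2t₁−a−t₂} h₁(x)². -/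

import Mathlib

noncomputable section

open Polynomial

/-- The finite field `GF(2^m)`. -/
abbrev Fq (m : ℕ) : Type := GaloisField 2 m

/-- The ring `R₃ = F[u]/⟨u³⟩`. -/
abbrev R3 (m : ℕ) : Type := AdjoinRoot (X ^ 3 : (Fq m)[X])

/-- The polynomial `x^{2^s} + 1` over `R₃`. -/
abbrev gR (m s : ℕ) : (R3 m)[X] := X ^ (2 ^ s) + 1

/-- The polynomial `x^{2^s} + 1` over `F`. -/
abbrev gK (m s : ℕ) : (Fq m)[X] := X ^ (2 ^ s) + 1

/-- The ring `𝓡 = R₃[x]/⟨x^{2^s}+1⟩`. -/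
abbrev RR (m s : ℕ) : Type := AdjoinRoot (gR m s)

/-- The ring `𝓚 = F[x]/⟨x^{2^s}+1⟩`. -/
abbrev KK (m s : ℕ) : Type := AdjoinRoot (gK m s)

/-- The element `u` of `R₃`. -/
def uu (m : ℕ) : R3 m := AdjoinRoot.root _

/-- The element `u` of `𝓡`. -/
def uR (m s : ℕ) : RR m s := algebraMap (R3 m) (RR m s) (uu m)

/-- The element `x` of `𝓡`. -/
def xR (m s : ℕ) : RR m s := AdjoinRoot.root _

/-- The element `x` of `𝓚`. -/
def xK (m s : ℕ) : KK m s := AdjoinRoot.root _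

lemma gR_monic (m s : ℕ) : (gR m s).Monic := by
  have h : (gR m s) = X ^ (2 ^ s) + C 1 := by simp [gR]
  rw [h]; exact monic_X_pow_add_C _ (by positivity)

lemma gK_monic (m s : ℕ) : (gK m s).Monic := by
  have h : (gK m s) = X ^ (2 ^ s) + C 1 := by simp [gK]
  rw [h]; exact monic_X_pow_add_C _ (by positivity)

/-- The standard representative (of degree `< 2^s`) of an element of `𝓡`. -/
def repR (m s : ℕ) (c : RR m s) : (R3 m)[X] := AdjoinRoot.modByMonicHom (gR_monic m s) c

/-- The standard representative (of degree `< 2^s`) of an element of `𝓚`. -/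
def repK (m s : ℕ) (c : KK m s) : (Fq m)[X] := AdjoinRoot.modByMonicHom (gK_monic m s) c

/-- The `j`-th coefficient of the standard representative of `c ∈ 𝓡`. -/
def coeffR (m s : ℕ) (c : RR m s) (j : ℕ) : R3 m := (repR m s c).coeff j

/-- The dot product on `𝓡`. -/
def dotR (m s : ℕ) (c d : RR m s) : R3 m :=
  ∑ j ∈ Finset.range (2 ^ s), coeffR m s c j * coeffR m s d j

/-- The dual of a set of codewords. -/
def dualSet (m s : ℕ) (S : Set (RR m s)) : Set (RR m s) :=
  {c | ∀ d ∈ S, dotR m s c d = 0}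

/-- A cyclic code (ideal of `𝓡`) is self-dual if it coincides with its dual. -/
def IsSelfDual (m s : ℕ) (C : Ideal (RR m s)) : Prop :=
  (C : Set (RR m s)) = dualSet m s (C : Set (RR m s))

/-- The annihilator of a set of codewords. -/
def annSet (m s : ℕ) (S : Set (RR m s)) : Set (RR m s) :=
  {c | ∀ d ∈ S, c * d = 0}

/-- The reciprocal `c*(x) = x^{deg c} c(x⁻¹)` of an element of `𝓡`. -/
def recip (m s : ℕ) (c : RR m s) : RR m s :=
  xR m s ^ (repR m s c).natDegree *
    Polynomial.aeval (Ring.inverse (xR m s)) (repR m s c)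

/-- Reduction `R₃ → F` modulo `u`. -/
def epsR3 (m : ℕ) : R3 m →+* Fq m :=
  AdjoinRoot.lift (RingHom.id (Fq m)) 0 (by simp)

lemma xK_pow_add_one (m s : ℕ) : (xK m s) ^ (2 ^ s) + 1 = 0 := by
  have h := AdjoinRoot.eval₂_root (gK m s)
  simpa [gK, xK] using h

lemma xR_pow_add_one (m s : ℕ) : (xR m s) ^ (2 ^ s) + 1 = 0 := by
  have h := AdjoinRoot.eval₂_root (gR m s)
  simpa [gR, xR] using h

/-- Reduction `μ : 𝓡 → 𝓚` modulo `u`. -/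
def muRK (m s : ℕ) : RR m s →+* KK m s :=
  AdjoinRoot.lift ((algebraMap (Fq m) (KK m s)).comp (epsR3 m)) (xK m s) (by
    simp only [gR, eval₂_add, eval₂_pow, eval₂_X, eval₂_one]
    exact xK_pow_add_one m s)

/-- The natural inclusion `𝓚 → 𝓡`. -/
def KtoR (m s : ℕ) : KK m s →+* RR m s :=
  AdjoinRoot.lift ((algebraMap (R3 m) (RR m s)).comp (algebraMap (Fq m) (R3 m))) (xR m s) (by
    simp only [gK, eval₂_add, eval₂_pow, eval₂_X, eval₂_one]
    exact xR_pow_add_one m s)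

/-- The `i`-th torsion code of a set `S ⊆ 𝓡`. -/
def TorSet (m s : ℕ) (S : Set (RR m s)) (i : ℕ) : Set (KK m s) :=
  muRK m s '' {f | (uR m s) ^ i * f ∈ S}

/-- The torsion degree `T_i`: the (unique) `k` with `Tor_i = ⟨(x+1)^k⟩`. -/
def Tdeg (m s : ℕ) (S : Set (RR m s)) (i : ℕ) : ℕ :=
  sInf {k | TorSet m s S i =
    ((Ideal.span {(xK m s + 1) ^ k} : Ideal (KK m s)) : Set (KK m s))}

/-- Substitution `h(x) ↦ h(x⁻¹)` on `𝓚`. -/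
def invSub (m s : ℕ) (h : KK m s) : KK m s :=
  Polynomial.aeval (Ring.inverse (xK m s)) (repK m s h)


lemma aux_u3 (m s : ℕ) : uR m s ^ 3 = 0 := by
  have h : (uu m) ^ 3 = 0 := by
    have h := AdjoinRoot.eval₂_root (X ^ 3 : (Fq m)[X])
    simpa [uu] using h
  rw [uR, ← map_pow, h, map_zero]

lemma aux_KtoR_mk (m s : ℕ) (p : (Fq m)[X]) :
    KtoR m s (AdjoinRoot.mk _ p) =
      AdjoinRoot.mk (gR m s) (p.map (algebraMap (Fq m) (R3 m))) := by
  rw [KtoR, AdjoinRoot.lift_mk, ← Polynomial.eval₂_map]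
  exact AdjoinRoot.aeval_eq _

lemma aux_KtoR_x (m s : ℕ) : KtoR m s (xK m s) = xR m s := by
  rw [KtoR, xK, AdjoinRoot.lift_root]

lemma aux_R3_decomp (m : ℕ) (r : R3 m) : ∃ a b c : Fq m,
    r = algebraMap _ _ a + uu m * algebraMap _ _ b + uu m ^ 2 * algebraMap _ _ c := by
  have h3 : (uu m) ^ 3 = 0 := by
    have h := AdjoinRoot.eval₂_root (X ^ 3 : (Fq m)[X])
    simpa [uu] using h
  induction r using AdjoinRoot.induction_on with
  | ih q =>
    have e : ∀ p : (Fq m)[X], AdjoinRoot.mk (X ^ 3 : (Fq m)[X]) p =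
        AdjoinRoot.mk _ p.divX * uu m + algebraMap _ _ (p.coeff 0) := by
      intro p
      conv_lhs => rw [← Polynomial.divX_mul_X_add p]
      rw [map_add, map_mul, AdjoinRoot.mk_X, AdjoinRoot.mk_C]
      rfl
    refine ⟨q.coeff 0, q.divX.coeff 0, q.divX.divX.coeff 0, ?_⟩
    · rw [e q, e q.divX, e q.divX.divX]
      linear_combination AdjoinRoot.mk (X ^ 3 : (Fq m)[X]) q.divX.divX.divX * h3

lemma aux_decomp (m s : ℕ) (c : RR m s) : ∃ c0 c1 c2 : KK m s,
    c = KtoR m s c0 + uR m s * KtoR m s c1 + uR m s ^ 2 * KtoR m s c2 := by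
  induction c using AdjoinRoot.induction_on with
  | ih p =>
    induction p using Polynomial.induction_on' with
    | add p q hp hq =>
      obtain ⟨a0, a1, a2, ha⟩ := hp
      obtain ⟨b0, b1, b2, hb⟩ := hq
      refine ⟨a0 + b0, a1 + b1, a2 + b2, ?_⟩
      rw [map_add, ha, hb]
      simp only [map_add]
      ring
    | monomial n r =>
      obtain ⟨a, b, c, rfl⟩ := aux_R3_decomp m r
      have k : ∀ a : Fq m, KtoR m s (algebraMap _ _ a) =
          algebraMap (R3 m) (RR m s) (algebraMap _ _ a) := by
        intro a
        rw [AdjoinRoot.algebraMap_eq, KtoR, AdjoinRoot.lift_of]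
        rfl
      refine ⟨algebraMap _ _ a * xK m s ^ n, algebraMap _ _ b * xK m s ^ n,
        algebraMap _ _ c * xK m s ^ n, ?_⟩
      rw [← Polynomial.C_mul_X_pow_eq_monomial, map_mul, map_pow, AdjoinRoot.mk_X,
        AdjoinRoot.mk_C, ← AdjoinRoot.algebraMap_eq]
      simp only [map_mul, map_add, map_pow, k, aux_KtoR_x]
      simp only [uR, xR]
      ring

lemma aux_inj (m s : ℕ) (k : KK m s) (h : uR m s ^ 2 * KtoR m s k = 0) : k = 0 := by
  have h2 : ∀ c : Fq m, uu m ^ 2 * algebraMap (Fq m) (R3 m) c = 0 → c = 0 := by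
    intro c hc
    have e : uu m ^ 2 * algebraMap (Fq m) (R3 m) c = AdjoinRoot.mk _ (X ^ 2 * C c) := by
      rw [map_mul, map_pow, AdjoinRoot.mk_X, AdjoinRoot.mk_C]; rfl
    rw [e, AdjoinRoot.mk_eq_zero, Polynomial.X_pow_dvd_iff] at hc
    have := hc 2 (by norm_num)
    simpa [Polynomial.coeff_X_pow_mul'] using this
  obtain ⟨p, hp, rfl⟩ : ∃ p : (Fq m)[X], p.degree < (gK m s).degree ∧ AdjoinRoot.mk _ p = k := by
    induction k using AdjoinRoot.induction_on with
    | ih q =>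
      refine ⟨q %ₘ gK m s, Polynomial.degree_modByMonic_lt _ (gK_monic m s), ?_⟩
      rw [AdjoinRoot.mk_eq_mk]
      have := Polynomial.modByMonic_add_div q (gK m s)
      exact ⟨-(q /ₘ gK m s), by linear_combination this⟩
  have hne : Nontrivial (R3 m) := by
    refine ⟨⟨uu m ^ 2 * algebraMap (Fq m) (R3 m) 1, 0, fun hc => one_ne_zero (h2 1 hc)⟩⟩
  have e : uR m s ^ 2 * KtoR m s (AdjoinRoot.mk _ p) =
      AdjoinRoot.mk (gR m s) (C (uu m ^ 2) * p.map (algebraMap (Fq m) (R3 m))) := by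
    rw [aux_KtoR_mk, map_mul, AdjoinRoot.mk_C, uR, ← map_pow]; rfl
  have hd : (gR m s).degree = (gK m s).degree := by
    have h1 : (gR m s) = X ^ (2 ^ s) + C 1 := by simp [gR]
    have h2 : (gK m s) = X ^ (2 ^ s) + C 1 := by simp [gK]
    rw [h1, h2, Polynomial.degree_X_pow_add_C (by positivity),
      Polynomial.degree_X_pow_add_C (by positivity)]
  rw [e, AdjoinRoot.mk_eq_zero] at h
  have hz : C (uu m ^ 2) * p.map (algebraMap (Fq m) (R3 m)) = 0 := by
    rw [← Polynomial.modByMonic_eq_zero_iff_dvd (gR_monic m s)] at h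
    rwa [(Polynomial.modByMonic_eq_self_iff (gR_monic m s)).2] at h
    rw [← Polynomial.smul_eq_C_mul]
    refine lt_of_le_of_lt (Polynomial.degree_smul_le _ _) ?_
    exact lt_of_le_of_lt Polynomial.degree_map_le (hd ▸ hp)
  have : p = 0 := by
    ext i
    apply h2
    have := congrArg (fun q => Polynomial.coeff q i) hz
    simpa only [Polynomial.coeff_C_mul, Polynomial.coeff_map, Polynomial.coeff_zero] using this
  rw [this, map_zero]

lemma aux_gK (m s : ℕ) : gK m s = (X + 1) ^ (2 ^ s) := by
  rw [add_pow_char_pow, one_pow]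

lemma aux_div (m s j : ℕ) (hj : j ≤ 2 ^ s) (k : KK m s) (h : k * (xK m s + 1) ^ j = 0) :
    ∃ l, k = (xK m s + 1) ^ (2 ^ s - j) * l := by
  induction k using AdjoinRoot.induction_on with
  | ih p =>
    have hne : (X + 1 : (Fq m)[X]) ≠ 0 := by
      have := Polynomial.X_add_C_ne_zero (1 : Fq m)
      simpa using this
    have e : AdjoinRoot.mk (gK m s) p * (xK m s + 1) ^ j =
        AdjoinRoot.mk (gK m s) (p * (X + 1) ^ j) := by
      simp [xK]
    rw [e, AdjoinRoot.mk_eq_zero, aux_gK] at h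
    have : (2 : ℕ) ^ s = (2 ^ s - j) + j := by omega
    rw [this, pow_add] at h
    obtain ⟨q, rfl⟩ := (mul_dvd_mul_iff_right (pow_ne_zero j hne)).1 h
    exact ⟨AdjoinRoot.mk _ q, by simp [xK]⟩

lemma aux_yN (m s : ℕ) : (xK m s + 1) ^ (2 ^ s) = 0 := by
  have : (xK m s + 1) ^ (2 ^ s) = AdjoinRoot.mk (gK m s) ((X + 1) ^ (2 ^ s)) := by simp [xK]
  rw [this, ← aux_gK, AdjoinRoot.mk_self]

lemma aux_two (m s : ℕ) : (2 : RR m s) = 0 := by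
  have h : (2 : Fq m) = 0 := CharTwo.two_eq_zero
  have := congrArg (algebraMap (R3 m) (RR m s)) (congrArg (algebraMap (Fq m) (R3 m)) h)
  simpa only [map_ofNat, map_zero] using this

/-- Abstract form of the computation. -/
lemma aux_abs {R : Type*} [CommRing R] (u y h g h2 q : R) (a t t2 n b d e z : ℕ)
    (hu : u ^ 3 = 0) (h20 : (2 : R) = 0) (hy : y ^ (2 * n) = 0) (hn : n ≤ a)
    (hb : a + b = 2 * n) (hd : a + d = n + t) (he : a + t2 + e = 2 * t)
    (hz : t + z = n) (hg : h - g = y ^ z * q)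
    (D : Ideal R)
    (hD : D = Ideal.span {y ^ a + u * y ^ t * h + u ^ 2 * y ^ t2 * (h2 + y ^ e * h ^ 2),
      u * y ^ n + u ^ 2 * y ^ d * h, u ^ 2 * y ^ b}) (c : R) (hc : c ∈ D) :
    c * (y ^ a + u * y ^ t * h + u ^ 2 * y ^ t2 * h2) = 0 ∧
    c * (u * y ^ n + u ^ 2 * y ^ d * g) = 0 ∧ c * (u ^ 2 * y ^ b) = 0 := by
  have E1 : y ^ a * y ^ b = 0 := by rw [← pow_add, hb, hy]
  have E2 : y ^ a * y ^ d = y ^ n * y ^ t := by rw [← pow_add, ← pow_add, hd]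
  have E3 : y ^ a * y ^ t2 * y ^ e = (y ^ t) ^ 2 := by
    rw [← pow_add, ← pow_add, ← pow_mul]; congr 1; omega
  have E4 : y ^ t * y ^ z = y ^ n := by rw [← pow_add, hz]
  have E5 : y ^ n * y ^ n = 0 := by rw [← pow_add, ← two_mul, hy]
  have E6 : y ^ a * y ^ n = 0 := by
    rw [← pow_add]; exact pow_eq_zero_of_le (by omega) hy
  have E7 : y ^ a * y ^ a = 0 := by
    rw [← pow_add]; exact pow_eq_zero_of_le (by omega) hy
  have hg' : g = h - y ^ z * q := by linear_combination -hg
  subst hg'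
  generalize y ^ a = A at *
  generalize y ^ b = B at *
  generalize y ^ d = P at *
  generalize y ^ n = N at *
  generalize y ^ t = T at *
  generalize y ^ e = E at *
  generalize y ^ t2 = S at *
  generalize y ^ z = Z at *
  rw [hD, Ideal.mem_span_insert] at hc
  obtain ⟨k1, w, hw, rfl⟩ := hc
  rw [Ideal.mem_span_pair] at hw
  obtain ⟨k2, k3, rfl⟩ := hw
  have hu4 : u ^ 4 = 0 := by rw [pow_succ, hu, zero_mul]
  refine ⟨?_, ?_, ?_⟩
  · grind
  · grind
  · grind

/-- Abstract form of the converse inclusion. -/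
lemma aux_conv {K R : Type*} [CommRing K] [CommRing R] (φ : K →+* R) (u : R) (y : K)
    (hu : u ^ 3 = 0) (a n b M : ℕ) (hMb : M - b = a) (hMn : M - n = n) (hMa : M - a = b)
    (hbM : b ≤ M) (hnM : n ≤ M) (haM : a ≤ M)
    (hdec : ∀ c : R, ∃ c0 c1 c2 : K, c = φ c0 + u * φ c1 + u ^ 2 * φ c2)
    (hinj : ∀ k : K, u ^ 2 * φ k = 0 → k = 0)
    (hdiv : ∀ j ≤ M, ∀ k : K, k * y ^ j = 0 → ∃ l, k = y ^ (M - j) * l)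
    (g1 g1' g2 h1 h1' h2 : K) (D : Ideal R)
    (H1 : φ y ^ a + u * φ h1 + u ^ 2 * φ h1' ∈ D)
    (H2 : u * φ y ^ n + u ^ 2 * φ h2 ∈ D) (H3 : u ^ 2 * φ y ^ b ∈ D)
    (A1 : ∀ d ∈ D, d * (φ y ^ a + u * φ g1 + u ^ 2 * φ g1') = 0)
    (A2 : ∀ d ∈ D, d * (u * φ y ^ n + u ^ 2 * φ g2) = 0)
    (c : R) (C1 : c * (φ y ^ a + u * φ g1 + u ^ 2 * φ g1') = 0)
    (C2 : c * (u * φ y ^ n + u ^ 2 * φ g2) = 0) (C3 : c * (u ^ 2 * φ y ^ b) = 0) :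
    c ∈ D := by
  obtain ⟨c0, c1, c2, rfl⟩ := hdec c
  obtain ⟨l0, rfl⟩ : ∃ l, c0 = y ^ a * l := by
    rw [← hMb]
    apply hdiv b hbM
    apply hinj
    rw [map_mul, map_pow]
    linear_combination C3 - (φ c1 + u * φ c2) * φ y ^ b * hu
  have k1 := D.mul_mem_left (φ l0) H1
  have e1 := A1 _ k1
  have e2 := A2 _ k1
  obtain ⟨l1, hl1⟩ : ∃ l, c1 - l0 * h1 = y ^ n * l := by
    rw [← hMn]
    apply hdiv n hnM
    apply hinj
    simp only [map_mul, map_pow, map_sub] at C2 ⊢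
    linear_combination C2 - e2 - ((φ c1 - φ l0 * φ h1) * φ g2 +
      (φ c2 - φ l0 * φ h1') * (φ y ^ n + u * φ g2)) * hu
  obtain rfl : c1 = l0 * h1 + y ^ n * l1 := by linear_combination hl1
  have k2 := D.mul_mem_left (φ l1) H2
  have e3 := A1 _ k2
  obtain ⟨l2, hl2⟩ : ∃ l, c2 - l0 * h1' - l1 * h2 = y ^ b * l := by
    rw [← hMa]
    apply hdiv a haM
    apply hinj
    simp only [map_mul, map_pow, map_sub, map_add] at C1 ⊢
    linear_combination C1 - e1 - e3 - (φ c2 - φ l0 * φ h1' - φ l1 * φ h2) *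
      (φ g1 + u * φ g1') * hu
  obtain rfl : c2 = l0 * h1' + l1 * h2 + y ^ b * l2 := by linear_combination hl2
  have k3 := D.mul_mem_left (φ l2) H3
  convert D.add_mem (D.add_mem k1 k2) k3 using 1
  simp only [map_mul, map_pow, map_add]
  ring

/-- Description of the annihilator of the code `C` of Eq. (8), where
`F(x) = h₂(x) + (x+1)^{2t₁−a−t₂} h₁(x)²`. -/
theorem stmt11 (m s : ℕ) (hm : 0 < m) (hs2 : 2 ≤ s)
    (a t₁ t₂ : ℕ) (h₁ h₂ : KK m s)
    (hh₁ : IsUnit h₁) (hh₂ : IsUnit h₂)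
    (ha1 : 2 ^ (s - 1) ≤ a) (ha2 : a ≤ 2 ^ (s - 1) + t₁)
    (ht₁ : t₁ < 2 ^ (s - 1)) (ht₁₂ : a + t₂ ≤ 2 * t₁)
    (hcong : h₁ - xK m s ^ (a - t₁) * invSub m s h₁ ∈
      Ideal.span {(xK m s + 1) ^ (2 ^ (s - 1) - t₁)})
    (C : Ideal (RR m s))
    (hC : C = Ideal.span
      {(xR m s + 1) ^ a + uR m s * (xR m s + 1) ^ t₁ * KtoR m s h₁ +
         uR m s ^ 2 * (xR m s + 1) ^ t₂ * KtoR m s h₂,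
       uR m s * (xR m s + 1) ^ (2 ^ (s - 1)) +
         uR m s ^ 2 * (xR m s + 1) ^ (2 ^ (s - 1) + t₁ - a) *
           KtoR m s (xK m s ^ (a - t₁) * invSub m s h₁),
       uR m s ^ 2 * (xR m s + 1) ^ (2 ^ s - a)})
    (hT0 : TorSet m s (C : Set (RR m s)) 0 =
      ((Ideal.span {(xK m s + 1) ^ a} : Ideal (KK m s)) : Set (KK m s)))
    (hT1 : TorSet m s (C : Set (RR m s)) 1 =
      ((Ideal.span {(xK m s + 1) ^ (2 ^ (s - 1))} : Ideal (KK m s)) : Set (KK m s)))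
    (hT2 : TorSet m s (C : Set (RR m s)) 2 =
      ((Ideal.span {(xK m s + 1) ^ (2 ^ s - a)} : Ideal (KK m s)) : Set (KK m s))) :
    annSet m s (C : Set (RR m s)) =
      ((Ideal.span
        {(xR m s + 1) ^ a + uR m s * (xR m s + 1) ^ t₁ * KtoR m s h₁ +
           uR m s ^ 2 * (xR m s + 1) ^ t₂ *
             KtoR m s (h₂ + (xK m s + 1) ^ (2 * t₁ - (a + t₂)) * h₁ ^ 2),
         uR m s * (xR m s + 1) ^ (2 ^ (s - 1)) +
           uR m s ^ 2 * (xR m s + 1) ^ (2 ^ (s - 1) + t₁ - a) * KtoR m s h₁,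
         uR m s ^ 2 * (xR m s + 1) ^ (2 ^ s - a)} : Ideal (RR m s)) : Set (RR m s)) := by
  have hpow : (2 : ℕ) ^ s = 2 * 2 ^ (s - 1) := by
    rw [← pow_succ']; congr 1; omega
  have hyR : (xR m s + 1) = KtoR m s (xK m s + 1) := by
    rw [map_add, aux_KtoR_x, map_one]
  have hyN : (xR m s + 1) ^ (2 * 2 ^ (s - 1)) = 0 := by
    rw [← hpow, hyR, ← map_pow, aux_yN, map_zero]
  obtain ⟨q, hq⟩ := Ideal.mem_span_singleton.1 hcong
  have hqR : KtoR m s h₁ - KtoR m s (xK m s ^ (a - t₁) * invSub m s h₁) =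
      (xR m s + 1) ^ (2 ^ (s - 1) - t₁) * KtoR m s q := by
    rw [← map_sub, hq, map_mul, map_pow, hyR]
  have hF : KtoR m s (h₂ + (xK m s + 1) ^ (2 * t₁ - (a + t₂)) * h₁ ^ 2) =
      KtoR m s h₂ + (xR m s + 1) ^ (2 * t₁ - (a + t₂)) * KtoR m s h₁ ^ 2 := by
    rw [map_add, map_mul, map_pow, map_pow, hyR]
  rw [hF]
  have hu := aux_u3 m s
  have hsub := aux_abs (uR m s) (xR m s + 1) (KtoR m s h₁)
    (KtoR m s (xK m s ^ (a - t₁) * invSub m s h₁)) (KtoR m s h₂) (KtoR m s q)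
    a t₁ t₂ (2 ^ (s - 1)) (2 ^ s - a) (2 ^ (s - 1) + t₁ - a) (2 * t₁ - (a + t₂))
    (2 ^ (s - 1) - t₁) hu (aux_two m s) hyN ha1 (by omega) (by omega) (by omega) (by omega)
    hqR _ rfl
  ext c
  constructor
  · intro hc
    rw [hC] at hc
    have hG := fun d hd => hc d hd
    have hG1 := hG _ (Ideal.subset_span (Set.mem_insert _ _))
    have hG2 := hG _ (Ideal.subset_span (Set.mem_insert_of_mem _ (Set.mem_insert _ _)))
    have hG3 := hG _ (Ideal.subset_span
      (Set.mem_insert_of_mem _ (Set.mem_insert_of_mem _ rfl)))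
    clear hG hc hT0 hT1 hT2
    refine aux_conv (KtoR m s) (uR m s) (xK m s + 1) hu a (2 ^ (s - 1)) (2 ^ s - a) (2 ^ s)
      (by omega) (by omega) (by omega) (by omega) (by omega) (by omega)
      (aux_decomp m s) (aux_inj m s) (fun j hj k => aux_div m s j hj k)
      ((xK m s + 1) ^ t₁ * h₁) ((xK m s + 1) ^ t₂ * h₂)
      ((xK m s + 1) ^ (2 ^ (s - 1) + t₁ - a) * (xK m s ^ (a - t₁) * invSub m s h₁))
      ((xK m s + 1) ^ t₁ * h₁)
      ((xK m s + 1) ^ t₂ * (h₂ + (xK m s + 1) ^ (2 * t₁ - (a + t₂)) * h₁ ^ 2))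
      ((xK m s + 1) ^ (2 ^ (s - 1) + t₁ - a) * h₁) _ ?_ ?_ ?_ ?_ ?_ c ?_ ?_ ?_
    · rw [map_mul, map_mul, hF, map_pow, map_pow, ← hyR, ← mul_assoc, ← mul_assoc]
      exact Ideal.subset_span (Set.mem_insert _ _)
    · rw [map_mul, map_pow, ← hyR, ← mul_assoc]
      exact Ideal.subset_span (Set.mem_insert_of_mem _ (Set.mem_insert _ _))
    · rw [← hyR]
      exact Ideal.subset_span (Set.mem_insert_of_mem _ (Set.mem_insert_of_mem _ rfl))
    · intro d hd
      rw [map_mul, map_mul, map_pow, map_pow, ← hyR, ← mul_assoc, ← mul_assoc]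
      exact (hsub d hd).1
    · intro d hd
      rw [map_mul, map_pow, ← hyR, ← mul_assoc]
      exact (hsub d hd).2.1
    · rw [map_mul, map_mul, map_pow, map_pow, ← hyR, ← mul_assoc, ← mul_assoc]
      exact hG1
    · rw [map_mul, map_pow, ← hyR, ← mul_assoc]
      exact hG2
    · rw [← hyR]
      exact hG3
  · intro hc d hd
    obtain ⟨e1, e2, e3⟩ := hsub c hc
    rw [SetLike.mem_coe, hC, Ideal.mem_span_insert] at hd
    obtain ⟨k1, w, hw, rfl⟩ := hd
    rw [Ideal.mem_span_pair] at hw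
    obtain ⟨k2, k3, rfl⟩ := hw
    linear_combination k1 * e1 + k2 * e2 + k3 * e3
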